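/- Let H = F(a,b) be the free group on two generators with generating set T = {b} ∪ {aᵏ : k ∈ ℤ, k ≠ 0}, let G be the group with presentation ⟨a,b,t ∣ t a t⁻¹ = b, t² = e⟩ with generating set S consisting of the images of the elements of T together with t, and let φ : H → G be the canonical homomorphism sending a ↦ a and b ↦ b. Then φ, viewed as a map from (H, dist_{(H,T)}) to (G, dist_{(G,S)}), is not a quasi-isometric embedding: there exist no constants L ≥ 1 and C ≥ 0 such that dist_{(H,T)}(h,h′) ≤ L · dist_{(G,S)}(φ(h),φ(h′)) + C for all h, h′ ∈ H. In particular φ is not a quasi-isometry. -/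

import Mathlib

open Pointwise

/-- The word metric on a group `G` with respect to a (possibly infinite) generating set
`S`: `wordDist S g h` is the least `m` such that `g⁻¹ * h` is a product of `m` elements
of `S ∪ S⁻¹`. -/
noncomputable def wordDist {G : Type*} [Group G] (S : Set G) (g h : G) : ℝ :=
  (sInf {n : ℕ | g⁻¹ * h ∈ (S ∪ S⁻¹) ^ n} : ℕ)

/-- The generators `a`, `b`, `t` of the group `G = ⟨a, b, t ∣ t a t⁻¹ = b, t² = e⟩`. -/
inductive GGen : Type
  | a : GGen
  | b : GGen
  | t : GGen

/-- The relators `t a t⁻¹ b⁻¹` and `t²` of `G = ⟨a, b, t ∣ t a t⁻¹ = b, t² = e⟩`. -/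
def gRels : Set (FreeGroup GGen) :=
  {FreeGroup.of GGen.t * FreeGroup.of GGen.a * (FreeGroup.of GGen.t)⁻¹ *
      (FreeGroup.of GGen.b)⁻¹,
    FreeGroup.of GGen.t * FreeGroup.of GGen.t}

/-- The group `G = ⟨a, b, t ∣ t a t⁻¹ = b, t² = e⟩`. -/
abbrev Gp : Type := PresentedGroup gRels

/-- The generating set `S` of `G` consisting of the images of the elements of
`T = {b} ∪ {aᵏ : k ≠ 0}` together with `t`. -/
def Sset : Set Gp :=
  {PresentedGroup.of GGen.b, PresentedGroup.of GGen.t} ∪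
    {x | ∃ k : ℤ, k ≠ 0 ∧ x = PresentedGroup.of (rels := gRels) GGen.a ^ k}

/-- The generators `a`, `b` of the free group `F(a,b)`. -/
inductive Gen : Type
  | a : Gen
  | b : Gen

/-- The infinite generating set `T = {b} ∪ {aᵏ : k ∈ ℤ, k ≠ 0}` of the free group
`F(a,b)`. -/
def Tset : Set (FreeGroup Gen) :=
  {FreeGroup.of Gen.b} ∪ {x | ∃ k : ℤ, k ≠ 0 ∧ x = FreeGroup.of Gen.a ^ k}

/-- The canonical homomorphism `φ : H = F(a,b) → G = ⟨a, b, t ∣ t a t⁻¹ = b, t² = e⟩`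
sending `a ↦ a` and `b ↦ b`. -/
noncomputable def phi : FreeGroup Gen →* Gp :=
  FreeGroup.lift fun g =>
    match g with
    | Gen.a => PresentedGroup.of GGen.a
    | Gen.b => PresentedGroup.of GGen.b

/-- Exponent sum of `b`. -/
def bexp : FreeGroup Gen →* Multiplicative ℤ :=
  FreeGroup.lift fun g =>
    match g with
    | Gen.a => 1
    | Gen.b => Multiplicative.ofAdd 1

lemma bexp_gen (x : FreeGroup Gen) (hx : x ∈ Tset ∪ Tset⁻¹) :
    |(bexp x).toAdd| ≤ 1 := by
  have key : ∀ y ∈ Tset, |(bexp y).toAdd| ≤ 1 := by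
    rintro y (rfl | ⟨k, -, rfl⟩) <;> simp [bexp]
  rcases hx with hx | hx
  · exact key x hx
  · have := key _ (Set.mem_inv.1 hx)
    simpa using this

lemma bexp_pow (n : ℕ) : ∀ x ∈ (Tset ∪ Tset⁻¹) ^ n, |(bexp x).toAdd| ≤ n := by
  induction n with
  | zero => intro x hx; simp at hx; simp [hx]
  | succ n ih =>
    intro x hx
    rw [pow_succ] at hx
    obtain ⟨y, hy, z, hz, rfl⟩ := Set.mem_mul.1 hx
    have h1 := ih y hy
    have h2 := bexp_gen z hz
    rw [map_mul, toAdd_mul]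
    push_cast
    exact (abs_add_le _ _).trans (by linarith)

lemma distT (n : ℕ) : (n : ℝ) ≤ wordDist Tset 1 (FreeGroup.of Gen.b ^ n) := by
  unfold wordDist
  have hne : {m : ℕ | (1 : FreeGroup Gen)⁻¹ * FreeGroup.of Gen.b ^ n ∈
      (Tset ∪ Tset⁻¹) ^ m}.Nonempty := by
    refine ⟨n, ?_⟩
    simp only [Set.mem_setOf_eq, inv_one, one_mul]
    exact Set.pow_mem_pow (Or.inl (Or.inl rfl))
  have h := bexp_pow _ _ (Nat.sInf_mem hne)
  simp only [inv_one, one_mul] at h ⊢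
  have e : (bexp (FreeGroup.of Gen.b ^ n)).toAdd = n := by simp [bexp]
  rw [e, abs_of_nonneg (by positivity)] at h
  exact_mod_cast h

lemma phi_b (n : ℕ) : phi (FreeGroup.of Gen.b ^ n) =
    PresentedGroup.of GGen.t * PresentedGroup.of GGen.a ^ (n : ℤ) *
      (PresentedGroup.of GGen.t)⁻¹ := by
  have h : (PresentedGroup.of GGen.t * PresentedGroup.of GGen.a *
      (PresentedGroup.of GGen.t)⁻¹ * (PresentedGroup.of GGen.b)⁻¹ : Gp) = 1 :=
    PresentedGroup.one_of_mem (rels := gRels) (Or.inl rfl)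
  rw [mul_inv_eq_one] at h
  rw [zpow_natCast, ← conj_pow, h]
  simp [phi]

lemma distS (n : ℕ) (hn : n ≠ 0) :
    wordDist Sset (phi 1) (phi (FreeGroup.of Gen.b ^ n)) ≤ 3 := by
  unfold wordDist
  have : sInf {m : ℕ | (phi 1)⁻¹ * phi (FreeGroup.of Gen.b ^ n) ∈
      (Sset ∪ Sset⁻¹) ^ m} ≤ 3 := by
    apply Nat.sInf_le
    simp only [Set.mem_setOf_eq, map_one, inv_one, one_mul]
    rw [phi_b, pow_succ, pow_two]
    have ht : (PresentedGroup.of GGen.t : Gp) ∈ Sset := Or.inl (Or.inr rfl)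
    refine Set.mul_mem_mul (Set.mul_mem_mul (Or.inl ht) (Or.inl (Or.inr ⟨n, ?_, rfl⟩)))
      (Or.inr (Set.inv_mem_inv.2 ht))
    exact_mod_cast hn
  exact_mod_cast this

lemma not_qie (L C : ℝ) (hL : 1 ≤ L)
    (h : ∀ h h' : FreeGroup Gen,
      wordDist Tset h h' ≤ L * wordDist Sset (phi h) (phi h') + C) : False := by
  obtain ⟨n, hn⟩ := exists_nat_gt (L * 3 + C)
  have h1 := h 1 (FreeGroup.of Gen.b ^ (n + 1))
  have h2 := distT (n + 1)
  have h3 := distS (n + 1) (by omega)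
  push_cast at h2
  nlinarith

/-- The canonical homomorphism `φ : (H, dist_T) → (G, dist_S)` is not
a quasi-isometric embedding: there are no `L ≥ 1`, `C ≥ 0` with
`dist_T(h,h') ≤ L · dist_S(φ h, φ h') + C` for all `h, h'`.  In particular `φ` is not
a quasi-isometry. -/
theorem statement9 :
    (¬ ∃ L C : ℝ, 1 ≤ L ∧ 0 ≤ C ∧
        ∀ h h' : FreeGroup Gen,
          wordDist Tset h h' ≤ L * wordDist Sset (phi h) (phi h') + C) ∧
      ¬ ∃ L C : ℝ, 1 ≤ L ∧ 0 ≤ C ∧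
          (∀ h h' : FreeGroup Gen,
            L⁻¹ * wordDist Tset h h' - C ≤ wordDist Sset (phi h) (phi h') ∧
              wordDist Sset (phi h) (phi h') ≤ L * wordDist Tset h h' + C) ∧
          ∀ y : Gp, ∃ h : FreeGroup Gen, wordDist Sset y (phi h) ≤ C := by
  refine ⟨fun ⟨L, C, hL, _, h⟩ => not_qie L C hL h, ?_⟩
  rintro ⟨L, C, hL, _, h, -⟩
  refine not_qie L (L * C) hL fun x y => ?_
  have h1 := (h x y).1
  have hL0 : 0 < L := by linarith
  have h2 := mul_le_mul_of_nonneg_left h1 hL0.le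
  rw [mul_sub, mul_inv_cancel_left₀ hL0.ne'] at h2
  linarith
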